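/- Let 0 < d < 2 and set α* = arcsin(d/2). For angles α, β set D_LR(α,β) = √((d + sin β + sin α)² + (cos β + cos α)²) and D_RL(α,β) = √((d − sin β − sin α)² + (cos β + cos α)²). Then for each α ∈ [0, α*) there exist unique values β_RL(α) and β_LR(α) in the interval (α + π, 2π − α) such that D_RL(α, β_RL(α)) = 2 and D_LR(α, β_LR(α)) = 2; these satisfy α + π < β_RL(α) < 2π − α* < β_LR(α) < 2π − α; for β ∈ [α + π, 2π − α] one has D_RL(α,β) < 2 iff β < β_RL(α) and D_LR(α,β) < 2 iff β < β_LR(α); the function β_LR is monotonically decreasing on [0, α*); and D_LR(α*, 2π − α*) = D_RL(α*, 2π − α*) = 2. -/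

import Mathlib

open Real

/-- Distance between the centers `ℓ_S = (-sin α, cos α)` and
`r_F = (d + sin β, -cos β)`. -/
noncomputable def DLR (d α β : ℝ) : ℝ :=
  Real.sqrt ((d + Real.sin β + Real.sin α) ^ 2 + (Real.cos β + Real.cos α) ^ 2)

/-- Distance between the centers `r_S = (sin α, -cos α)` and
`ℓ_F = (d - sin β, cos β)`. -/
noncomputable def DRL (d α β : ℝ) : ℝ :=
  Real.sqrt ((d - Real.sin β - Real.sin α) ^ 2 + (Real.cos β + Real.cos α) ^ 2)


/-- Half of `D_LR ^ 2 - 4` in the variable `g = 2π - β`, doubled. -/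
noncomputable def FLR (d a g : ℝ) : ℝ := d^2 - 2 + 2*d*(sin a - sin g) + 2*cos (a+g)

/-- The analogue for `D_RL`. -/
noncomputable def FRL (d a g : ℝ) : ℝ := d^2 - 2 + 2*d*(sin g - sin a) + 2*cos (a+g)

lemma sqrt_two_lt (x : ℝ) : √x < 2 ↔ x - 4 < 0 := by
  rw [Real.sqrt_lt' (by norm_num)]
  constructor <;> intro h <;> linarith

lemma sqrt_two_eq (x : ℝ) : √x = 2 ↔ x - 4 = 0 := by
  rw [Real.sqrt_eq_iff_mul_self_eq_of_pos (by norm_num)]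
  constructor <;> intro h <;> linarith

lemma DLR_id (d a b : ℝ) : (d + sin b + sin a) ^ 2 + (cos b + cos a) ^ 2 - 4
    = FLR d a (2*π - b) := by
  unfold FLR
  rw [cos_add, sin_two_pi_sub, cos_two_pi_sub]
  linear_combination sin_sq_add_cos_sq a + sin_sq_add_cos_sq b

lemma DRL_id (d a b : ℝ) : (d - sin b - sin a) ^ 2 + (cos b + cos a) ^ 2 - 4
    = FRL d a (2*π - b) := by
  unfold FRL
  rw [cos_add, sin_two_pi_sub, cos_two_pi_sub]
  linear_combination sin_sq_add_cos_sq a + sin_sq_add_cos_sq b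

lemma DLR_lt (d a b : ℝ) : DLR d a b < 2 ↔ FLR d a (2*π - b) < 0 := by
  unfold DLR; rw [sqrt_two_lt, DLR_id]
lemma DLR_eq (d a b : ℝ) : DLR d a b = 2 ↔ FLR d a (2*π - b) = 0 := by
  unfold DLR; rw [sqrt_two_eq, DLR_id]
lemma DRL_lt (d a b : ℝ) : DRL d a b < 2 ↔ FRL d a (2*π - b) < 0 := by
  unfold DRL; rw [sqrt_two_lt, DRL_id]
lemma DRL_eq (d a b : ℝ) : DRL d a b = 2 ↔ FRL d a (2*π - b) = 0 := by
  unfold DRL; rw [sqrt_two_eq, DRL_id]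

/-- Single crossing. -/
lemma crossing (f : ℝ → ℝ) (hf : Continuous f) (a b l r : ℝ) (hal : a ≤ l) (hlr : l ≤ r)
    (hrb : r ≤ b) (hl : 0 < f l) (hr : f r < 0)
    (hc : ∀ x ∈ Set.Icc a b, ∀ y ∈ Set.Icc a b, x < y → f x ≤ 0 → f y < 0) :
    ∃ g, l < g ∧ g < r ∧ f g = 0 ∧ (∀ x ∈ Set.Icc a b, (f x < 0 ↔ g < x)) ∧
      (∀ x ∈ Set.Icc a b, f x = 0 → x = g) := by
  obtain ⟨g, ⟨h1, h2⟩, hg⟩ := intermediate_value_Icc' hlr hf.continuousOn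
    (show (0:ℝ) ∈ Set.Icc (f r) (f l) from ⟨hr.le, hl.le⟩)
  have h1' : l < g := lt_of_le_of_ne h1 (by rintro rfl; linarith)
  have h2' : g < r := lt_of_le_of_ne h2 (by rintro rfl; linarith)
  have hgm : g ∈ Set.Icc a b := ⟨by linarith, by linarith⟩
  refine ⟨g, h1', h2', hg, ?_, ?_⟩
  · intro x hx
    constructor
    · intro h
      by_contra hn
      rcases lt_or_eq_of_le (not_lt.mp hn) with h' | h'
      · have := hc x hx g hgm h' h.le
        linarith
      · rw [h'] at h; linarith
    · intro h
      exact hc g hgm x hx h hg.le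
  · intro x hx h
    rcases lt_trichotomy x g with h' | h' | h'
    · have := hc x hx g hgm h' h.le
      linarith
    · exact h'
    · have := hc g hgm x hx h' hg.le
      linarith

section
variable {d s : ℝ}

lemma FLR_neg (hd0 : 0 < d) (hd2 : d < 2) (a g : ℝ) (ha : 0 ≤ a) (hg : π/2 ≤ g)
    (hg2 : g ≤ π - a) : FLR d a g < 0 := by
  obtain ⟨u, hu⟩ : ∃ u, u = (g-a)/2 := ⟨_, rfl⟩
  obtain ⟨v, hv⟩ : ∃ v, v = (g+a)/2 := ⟨_, rfl⟩
  have e1 : a = v - u := by rw [hu, hv]; ring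
  have e2 : g = v + u := by rw [hu, hv]; ring
  have hpi := pi_pos
  have hcv : 0 ≤ cos v := cos_nonneg_of_mem_Icc ⟨by linarith, by linarith⟩
  have hle : cos v ≤ sin u := by
    rw [← sin_pi_div_two_sub]
    apply sin_le_sin_of_le_of_le_pi_div_two <;> linarith
  have e3 : FLR d a g = d^2 - 4*d*(cos v * sin u) - 4 + 4 * cos v^2 := by
    unfold FLR
    have : a + g = 2 * v := by rw [e1, e2]; ring
    rw [this, cos_two_mul, e1, e2, sin_sub, sin_add]
    ring
  rw [e3]
  have h1 : cos v^2 ≤ cos v * sin u := by nlinarith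
  have h2 : cos v^2 ≤ 1 := cos_sq_le_one v
  have h3 : 0 ≤ cos v^2 := sq_nonneg _
  have h4 : d * cos v^2 ≤ d * (cos v * sin u) := by gcongr
  rcases le_total d 1 with h | h <;> nlinarith

lemma FLR_mono (hd0 : 0 < d) (has0 : s < π/2) (hs : sin s = d/2) (a1 a2 g : ℝ)
    (ha : 0 ≤ a1) (h12 : a1 ≤ a2) (h2 : a2 ≤ g) (hg : g ≤ s) :
    FLR d a1 g ≤ FLR d a2 g := by
  obtain ⟨m, hm⟩ : ∃ m, m = (a2+a1)/2 := ⟨_, rfl⟩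
  obtain ⟨h, hh⟩ : ∃ h, h = (a2-a1)/2 := ⟨_, rfl⟩
  have e1 : a1 = m - h := by rw [hm, hh]; ring
  have e2 : a2 = m + h := by rw [hm, hh]; ring
  have e3 : FLR d a2 g - FLR d a1 g = 4 * sin h * (d * cos m - sin (m+g)) := by
    unfold FLR
    have q1 : a1 + g = (m+g) - h := by rw [e1]; ring
    have q2 : a2 + g = (m+g) + h := by rw [e2]; ring
    rw [q1, q2, cos_sub (m+g), cos_add (m+g), e1, e2, sin_sub m h, sin_add m h]
    ring
  have hpi := pi_pos
  have k1 : 0 ≤ sin h := sin_nonneg_of_nonneg_of_le_pi (by linarith) (by linarith)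
  have k2 : 0 ≤ sin (g - m) := sin_nonneg_of_nonneg_of_le_pi (by linarith) (by linarith)
  have k3 : sin g ≤ d/2 := by
    rw [← hs]; apply sin_le_sin_of_le_of_le_pi_div_two <;> linarith
  have k4 : 0 ≤ cos m := cos_nonneg_of_mem_Icc ⟨by linarith, by linarith⟩
  rw [sin_sub] at k2
  have k5 : 0 ≤ d * cos m - sin (m+g) := by
    rw [sin_add]; nlinarith
  have := mul_nonneg (mul_nonneg (by norm_num : (0:ℝ) ≤ 4) k1) k5
  linarith

lemma diag_pos (hd0 : 0 < d) (hs1 : s < π/2) (hs : sin s = d/2) (a : ℝ)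
    (ha : 0 ≤ a) (has : a < s) : 0 < d^2 - 2 + 2*cos (a+a) := by
  have hpi := pi_pos
  have k : sin a < d/2 := by
    rw [← hs]; apply sin_lt_sin_of_lt_of_le_pi_div_two <;> linarith
  have k0 : 0 ≤ sin a := sin_nonneg_of_nonneg_of_le_pi (by linarith) (by linarith)
  rw [← two_mul, cos_two_mul]
  nlinarith [sin_sq_add_cos_sq a]

lemma exists_LR (hd0 : 0 < d) (hd2 : d < 2) (hs1 : s < π/2) (hs : sin s = d/2) (a : ℝ)
    (ha : 0 ≤ a) (has : a < s) :
    ∃ g, a < g ∧ g < s ∧ FLR d a g = 0 ∧ (∀ x ∈ Set.Icc a (π-a), (FLR d a x < 0 ↔ g < x)) ∧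
      (∀ x ∈ Set.Icc a (π-a), FLR d a x = 0 → x = g) := by
  have hpi := pi_pos
  apply crossing (FLR d a) (by unfold FLR; fun_prop) a (π-a) a s le_rfl has.le (by linarith)
  · have := diag_pos hd0 hs1 hs a ha has
    unfold FLR
    linarith
  · have h1 : cos (s - a) < 1 := by
      rw [← cos_zero]
      apply cos_lt_cos_of_nonneg_of_le_pi <;> linarith
    rw [cos_sub] at h1
    unfold FLR
    rw [cos_add]
    have : d = 2 * sin s := by linarith
    rw [this]
    nlinarith
  · rintro x ⟨hx1, hx2⟩ y ⟨hy1, hy2⟩ hxy hx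
    rcases le_total (π/2) y with h | h
    · exact FLR_neg hd0 hd2 a y ha h hy2
    · have k1 : sin x < sin y := by
        apply sin_lt_sin_of_lt_of_le_pi_div_two <;> linarith
      have k2 : cos (a+y) < cos (a+x) := by
        apply cos_lt_cos_of_nonneg_of_le_pi <;> linarith
      unfold FLR at *
      nlinarith

lemma exists_RL (hd0 : 0 < d) (hd2 : d < 2) (hs1 : s < π/2) (hs : sin s = d/2) (a : ℝ)
    (ha : 0 ≤ a) (has : a < s) :
    ∃ g, s < g ∧ g < π - a ∧ FRL d a g = 0 ∧
      (∀ x ∈ Set.Icc a (π-a), (FRL d a x < 0 ↔ g < x)) ∧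
      (∀ x ∈ Set.Icc a (π-a), FRL d a x = 0 → x = g) := by
  have hpi := pi_pos
  have hsa : sin a < sin s := by
    apply sin_lt_sin_of_lt_of_le_pi_div_two <;> linarith
  have hca : 0 < cos a := cos_pos_of_mem_Ioo ⟨by linarith, by linarith⟩
  apply crossing (FRL d a) (by unfold FRL; fun_prop) a (π-a) s (π-a) has.le (by linarith) le_rfl
  · have h1 : cos s < cos a := by
      apply cos_lt_cos_of_nonneg_of_le_pi <;> linarith
    have hcs : 0 < cos s := cos_pos_of_mem_Ioo ⟨by linarith, by linarith⟩
    unfold FRL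
    rw [cos_add]
    have : d = 2 * sin s := by linarith
    rw [this]
    have hs0 : 0 < sin s := by linarith
    nlinarith [sin_sq_add_cos_sq s, mul_pos hs0 (sub_pos.mpr hsa), mul_pos hcs (sub_pos.mpr h1)]
  · unfold FRL
    rw [sin_pi_sub, add_sub_cancel, cos_pi]
    nlinarith
  · have hdiag := diag_pos hd0 hs1 hs a ha has
    obtain ⟨p, hp⟩ : ∃ p, p = arctan ((2*d - 2*sin a)/(2*cos a)) := ⟨_, rfl⟩
    have hA : 0 < 2*d - 2*sin a := by linarith
    have hp0 : 0 < p := by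
      rw [hp, arctan_pos]; positivity
    have hp1 : p < π/2 := by rw [hp]; exact arctan_lt_pi_div_two _
    have hcp : 0 < cos p := cos_pos_of_mem_Ioo ⟨by linarith, by linarith⟩
    obtain ⟨R, hR⟩ : ∃ R, R = 2 * cos a / cos p := ⟨_, rfl⟩
    have hR0 : 0 < R := by rw [hR]; positivity
    have hB : R * cos p = 2 * cos a := by rw [hR]; field_simp
    have hAA : R * sin p = 2*d - 2*sin a := by
      have ht : tan p = (2*d - 2*sin a)/(2*cos a) := by rw [hp, tan_arctan]
      rw [tan_eq_sin_div_cos, div_eq_div_iff hcp.ne' (by positivity)] at ht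
      rw [hR]; field_simp; linarith
    have key : ∀ x, FRL d a x = d^2 - 2 - 2*d*sin a + R * cos (x - p) := by
      intro x
      unfold FRL
      rw [cos_add, cos_sub]
      linear_combination (-sin x) * hAA - cos x * hB
    rintro x ⟨hx1, hx2⟩ y ⟨hy1, hy2⟩ hxy hx
    have hfa : 0 < FRL d a a := by unfold FRL; linarith
    rcases le_total p x with h | h
    · have : cos (y-p) < cos (x-p) := by
        apply cos_lt_cos_of_nonneg_of_le_pi <;> linarith
      have := mul_lt_mul_of_pos_left this hR0
      rw [key] at *
      linarith
    · exfalso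
      have : cos (p-a) ≤ cos (p-x) := by
        apply cos_le_cos_of_nonneg_of_le_pi <;> linarith
      rw [← cos_neg (p-a), ← cos_neg (p-x), neg_sub, neg_sub] at this
      have := mul_le_mul_of_nonneg_left this hR0.le
      rw [key] at hx hfa
      linarith

end

/-- Let `0 < d < 2`, `α* = arcsin (d/2)`.  For each `α ∈ [0, α*)`
there are unique values `β_RL α` and `β_LR α` in `(α + π, 2π - α)` where
`D_RL`, resp. `D_LR`, equals `2`; they satisfy
`α + π < β_RL α < 2π - α* < β_LR α < 2π - α`; for `β ∈ [α + π, 2π - α]` one has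
`D_RL < 2` iff `β < β_RL α` and `D_LR < 2` iff `β < β_LR α`; the function `β_LR`
is monotonically decreasing on `[0, α*)`; and
`D_LR(α*, 2π - α*) = D_RL(α*, 2π - α*) = 2`. -/
theorem case_b_alpha_monotone (d : ℝ) (hd0 : 0 < d) (hd2 : d < 2) :
    ∃ βRL βLR : ℝ → ℝ,
      (∀ α ∈ Set.Ico (0:ℝ) (Real.arcsin (d / 2)),
        (α + π < βRL α ∧ βRL α < 2 * π - Real.arcsin (d / 2)) ∧
        (2 * π - Real.arcsin (d / 2) < βLR α ∧ βLR α < 2 * π - α) ∧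
        DRL d α (βRL α) = 2 ∧ DLR d α (βLR α) = 2 ∧
        (∀ β ∈ Set.Ioo (α + π) (2 * π - α), DRL d α β = 2 → β = βRL α) ∧
        (∀ β ∈ Set.Ioo (α + π) (2 * π - α), DLR d α β = 2 → β = βLR α) ∧
        (∀ β ∈ Set.Icc (α + π) (2 * π - α), (DRL d α β < 2 ↔ β < βRL α)) ∧
        (∀ β ∈ Set.Icc (α + π) (2 * π - α), (DLR d α β < 2 ↔ β < βLR α))) ∧
      AntitoneOn βLR (Set.Ico 0 (Real.arcsin (d / 2))) ∧
      DLR d (Real.arcsin (d / 2)) (2 * π - Real.arcsin (d / 2)) = 2 ∧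
      DRL d (Real.arcsin (d / 2)) (2 * π - Real.arcsin (d / 2)) = 2 := by
  obtain ⟨s, hsdef⟩ : ∃ s, s = arcsin (d/2) := ⟨_, rfl⟩
  rw [← hsdef]
  have hs : sin s = d/2 := by rw [hsdef]; exact sin_arcsin (by linarith) (by linarith)
  have hs1 : s < π/2 := by rw [hsdef, arcsin_lt_pi_div_two]; linarith
  have hL : ∀ a, ∃ g, a ∈ Set.Ico 0 s → (a < g ∧ g < s ∧ FLR d a g = 0 ∧
      (∀ x ∈ Set.Icc a (π-a), (FLR d a x < 0 ↔ g < x)) ∧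
      (∀ x ∈ Set.Icc a (π-a), FLR d a x = 0 → x = g)) := by
    intro a
    by_cases h : a ∈ Set.Ico 0 s
    · obtain ⟨g, hg⟩ := exists_LR hd0 hd2 hs1 hs a h.1 h.2
      exact ⟨g, fun _ => hg⟩
    · exact ⟨0, fun h' => absurd h' h⟩
  have hR : ∀ a, ∃ g, a ∈ Set.Ico 0 s → (s < g ∧ g < π - a ∧ FRL d a g = 0 ∧
      (∀ x ∈ Set.Icc a (π-a), (FRL d a x < 0 ↔ g < x)) ∧
      (∀ x ∈ Set.Icc a (π-a), FRL d a x = 0 → x = g)) := by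
    intro a
    by_cases h : a ∈ Set.Ico 0 s
    · obtain ⟨g, hg⟩ := exists_RL hd0 hd2 hs1 hs a h.1 h.2
      exact ⟨g, fun _ => hg⟩
    · exact ⟨0, fun h' => absurd h' h⟩
  choose gL hgL using hL
  choose gR hgR using hR
  refine ⟨fun a => 2*π - gR a, fun a => 2*π - gL a, ?_, ?_, ?_, ?_⟩
  · intro a ha
    obtain ⟨l1, l2, l3, l4, l5⟩ := hgL a ha
    obtain ⟨r1, r2, r3, r4, r5⟩ := hgR a ha
    refine ⟨⟨by linarith, by linarith⟩, ⟨by linarith, by linarith⟩, ?_, ?_, ?_, ?_, ?_, ?_⟩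
    · rw [DRL_eq, sub_sub_cancel]; exact r3
    · rw [DLR_eq, sub_sub_cancel]; exact l3
    · rintro b ⟨h1, h2⟩ h
      rw [DRL_eq] at h
      have := r5 (2*π - b) ⟨by linarith, by linarith⟩ h
      linarith
    · rintro b ⟨h1, h2⟩ h
      rw [DLR_eq] at h
      have := l5 (2*π - b) ⟨by linarith, by linarith⟩ h
      linarith
    · rintro b ⟨h1, h2⟩
      rw [DRL_lt, r4 (2*π - b) ⟨by linarith, by linarith⟩]
      constructor <;> intro h <;> linarith
    · rintro b ⟨h1, h2⟩
      rw [DLR_lt, l4 (2*π - b) ⟨by linarith, by linarith⟩]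
      constructor <;> intro h <;> linarith
  · intro a ha b hb hab
    obtain ⟨l1, l2, l3, l4, l5⟩ := hgL a ha
    obtain ⟨r1, r2, r3, r4, r5⟩ := hgL b hb
    suffices gL a ≤ gL b by
      show 2*π - gL b ≤ 2*π - gL a
      linarith
    rcases le_total (gL a) b with h | h
    · linarith
    · have hm := FLR_mono hd0 hs1 hs a b (gL a) ha.1 hab h l2.le
      by_contra hn
      have := (r4 (gL a) ⟨h, by linarith [hb.2]⟩).2 (not_le.mp hn)
      linarith
  · rw [DLR_eq, sub_sub_cancel]
    unfold FLR
    rw [← two_mul, cos_two_mul, cos_sq', hs]; ring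
  · rw [DRL_eq, sub_sub_cancel]
    unfold FRL
    rw [← two_mul, cos_two_mul, cos_sq', hs]; ring
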